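/- arXiv:1401.4564 — 2 statements merged into one kernel-verified Lean document; each statement's English description precedes it below -/
import Mathlib

section
/- For every z ∈ ℂ*, the theta function admits the (Jacobi triple) product representation Θ_q(z) = ∏_{ℓ∈ℕ} (1 − q^{−ℓ−1})(1 + q^{−ℓ−1} z)(1 + q^{−ℓ} z^{−1}), the infinite product converging (locally uniformly) on ℂ*. -/
/-- The Jacobi theta function `Θ_q(z) = ∑_{ℓ ∈ ℤ} q^{-ℓ(ℓ+1)/2} z^ℓ`. -/
noncomputable def theta (q z : ℂ) : ℂ := ∑' ℓ : ℤ, q ^ (-(ℓ * (ℓ + 1) / 2)) * z ^ ℓ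

/-!
Put `p = q⁻¹`, so that `‖p‖ < 1`. Pascal's rule for Gaussian binomial coefficients gives, by
induction on `n`, the finite triple product
`(-pz; p)_n (-z⁻¹; p)_n = ∑_j [2n choose n + j]_p p^{j(j+1)/2} z^j`.
As `n → ∞` the coefficients `[2n choose n + j]_p` stay bounded and tend to `1 / (p; p)_∞`, so
dominated convergence yields `(-pz; p)_∞ (-z⁻¹; p)_∞ = (p; p)_∞⁻¹ ∑_j p^{j(j+1)/2} z^j`.
-/

open Filter Topology

section FiniteTripleProduct

/-- The finite `q`-Pochhammer symbol `(a; p)_n = ∏_{k < n} (1 - a p^k)`, with base `p`. -/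
def qPochhammer {R : Type*} [CommRing R] (a p : R) (n : ℕ) : R :=
  ∏ k ∈ Finset.range n, (1 - a * p ^ k)

lemma qPochhammer_succ {R : Type*} [CommRing R] (a p : R) (n : ℕ) :
    qPochhammer a p (n + 1) = qPochhammer a p n * (1 - a * p ^ n) :=
  Finset.prod_range_succ _ n

variable {K : Type*} [Field K] {p z : K}

lemma one_sub_mul_pow_self_ne_zero (hp : ¬IsOfFinOrder p) (k : ℕ) : 1 - p * p ^ k ≠ 0 := by
  rw [← pow_succ', sub_ne_zero]
  exact fun h ↦ hp (isOfFinOrder_iff_pow_eq_one.mpr ⟨k + 1, k.succ_pos, h.symm⟩)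

lemma qPochhammer_self_ne_zero (hp : ¬IsOfFinOrder p) (n : ℕ) : qPochhammer p p n ≠ 0 :=
  Finset.prod_ne_zero_iff.mpr fun k _ ↦ one_sub_mul_pow_self_ne_zero hp k

/-- The reciprocal `1 / (p; p)_m`, with the usual convention that it vanishes for `m < 0`; this
makes its recursion `invQPochhammer_sub_one` valid for every integer `m`. -/
def invQPochhammer (p : K) : ℤ → K
  | .ofNat m => (qPochhammer p p m)⁻¹
  | .negSucc _ => 0

lemma invQPochhammer_natCast (p : K) (m : ℕ) : invQPochhammer p m = (qPochhammer p p m)⁻¹ := rfl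

lemma invQPochhammer_of_neg (p : K) {m : ℤ} (hm : m < 0) : invQPochhammer p m = 0 := by
  obtain ⟨k, rfl⟩ := Int.eq_negSucc_of_lt_zero hm
  rfl

lemma invQPochhammer_sub_one (hp : ¬IsOfFinOrder p) (m : ℤ) :
    invQPochhammer p (m - 1) = (1 - p ^ m) * invQPochhammer p m := by
  rcases lt_trichotomy m 0 with hm | rfl | hm
  · rw [invQPochhammer_of_neg p hm, invQPochhammer_of_neg p (by lia), mul_zero]
  · simp [invQPochhammer_of_neg p neg_one_lt_zero]
  · obtain ⟨k, rfl⟩ : ∃ k : ℕ, m = (k + 1 : ℕ) := ⟨(m - 1).toNat, by lia⟩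
    have hk := one_sub_mul_pow_self_ne_zero hp k
    rw [zpow_natCast, pow_succ', invQPochhammer_natCast, qPochhammer_succ, Nat.cast_succ,
      add_sub_cancel_right, invQPochhammer_natCast, mul_inv_rev, mul_inv_cancel_left₀ hk]

/-- The Gaussian binomial coefficient `[2n choose n + j]_p`, which vanishes unless `|j| ≤ n`. -/
def centralQBinom (p : K) (n : ℕ) (j : ℤ) : K :=
  qPochhammer p p (2 * n) * (invQPochhammer p (n + j) * invQPochhammer p (n - j))

lemma centralQBinom_zero_zero (p : K) : centralQBinom p 0 0 = 1 := by
  simp [centralQBinom, qPochhammer, invQPochhammer]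

lemma centralQBinom_zero_of_ne (p : K) {j : ℤ} (hj : j ≠ 0) : centralQBinom p 0 j = 0 := by
  rcases hj.lt_or_gt with h | h
  · simp [centralQBinom, invQPochhammer_of_neg p h]
  · simp [centralQBinom, invQPochhammer_of_neg p (neg_lt_zero.mpr h)]

lemma centralQBinom_succ (hp₀ : p ≠ 0) (hp : ¬IsOfFinOrder p) (n : ℕ) (j : ℤ) :
    centralQBinom p (n + 1) j = (1 + p ^ (2 * n + 1)) * centralQBinom p n j
      + p ^ (n + 1 - j) * centralQBinom p n (j - 1)
      + p ^ (n + 1 + j) * centralQBinom p n (j + 1) := by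
  have qPochhammer_two_mul_succ : qPochhammer p p (2 * (n + 1)) =
      qPochhammer p p (2 * n) * (1 - p ^ (2 * n + 1)) * (1 - p ^ (2 * n + 2)) := by
    rw [mul_add_one, qPochhammer_succ, qPochhammer_succ]
    ring
  have shift_one (i : ℤ) : invQPochhammer p (n + i) =
      (1 - p ^ (n + 1 + i)) * invQPochhammer p (n + 1 + i) := by
    rw [← invQPochhammer_sub_one hp]
    congr 1
    ring
  have shift_two (i : ℤ) : invQPochhammer p (n + i - 1) =
      (1 - p ^ (n + i)) * ((1 - p ^ (n + 1 + i)) * invQPochhammer p (n + 1 + i)) := by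
    rw [invQPochhammer_sub_one hp, shift_one]
  -- Both sides are multiples of `1 / ((p; p)_{n+1+j} (p; p)_{n+1-j})`, which leaves an identity
  -- between polynomials in `p`, `p ^ n` and `p ^ j`.
  simp only [centralQBinom, qPochhammer_two_mul_succ, Nat.cast_succ, sub_eq_add_neg (n : ℤ),
    sub_eq_add_neg ((n : ℤ) + 1), neg_add, neg_sub]
  rw [show (n : ℤ) + (j - 1) = n + j - 1 by ring, show (n : ℤ) + (1 - j) = n + 1 + -j by ring,
    show (n : ℤ) + (j + 1) = n + 1 + j by ring, show (n : ℤ) + (-j + -1) = n + -j - 1 by ring,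
    shift_two j, shift_two (-j), shift_one j, shift_one (-j)]
  simp only [zpow_add₀ hp₀, zpow_neg, zpow_natCast, zpow_one]
  field_simp [zpow_ne_zero j hp₀]
  ring

/-- The general term `p^{j(j+1)/2} z^j` of the theta series, with nome `p = q⁻¹`. -/
def thetaTerm (p z : K) (j : ℤ) : K := p ^ (j * (j + 1) / 2) * z ^ j

lemma thetaTerm_add_one (hp₀ : p ≠ 0) (hz : z ≠ 0) (j : ℤ) :
    thetaTerm p z (j + 1) = p ^ (j + 1) * z * thetaTerm p z j := by
  have triangular_succ : (j + 1) * (j + 1 + 1) / 2 = j * (j + 1) / 2 + (j + 1) := by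
    rw [← Int.add_mul_ediv_right _ _ two_ne_zero]
    congr 1
    ring
  rw [thetaTerm, thetaTerm, triangular_succ, zpow_add₀ hp₀, zpow_add_one₀ hz]
  ring

lemma thetaTerm_neg_add_one (p : K) (hz : z ≠ 0) (j : ℤ) :
    thetaTerm p z (-(j + 1)) = z⁻¹ * thetaTerm p z⁻¹ j := by
  have triangular_neg : -(j + 1) * (-(j + 1) + 1) / 2 = j * (j + 1) / 2 := by
    congr 1
    ring
  rw [thetaTerm, thetaTerm, triangular_neg, zpow_neg, ← inv_zpow, zpow_add_one₀ (inv_ne_zero hz)]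
  ring

lemma hasSum_centralQBinom_mul_thetaTerm [TopologicalSpace K] [IsTopologicalSemiring K]
    (hp₀ : p ≠ 0) (hp : ¬IsOfFinOrder p) (hz : z ≠ 0) (n : ℕ) :
    HasSum (fun j ↦ centralQBinom p n j * thetaTerm p z j)
      (qPochhammer (-(p * z)) p n * qPochhammer (-z⁻¹) p n) := by
  induction n with
  | zero =>
    have h := hasSum_single (f := fun j ↦ centralQBinom p 0 j * thetaTerm p z j) 0
      fun j hj ↦ by rw [centralQBinom_zero_of_ne p hj, zero_mul]
    simpa [qPochhammer, centralQBinom_zero_zero, thetaTerm] using h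
  | succ n ih =>
    have ih_pred := (Equiv.subRight (1 : ℤ)).hasSum_iff.mpr ih
    have ih_succ := (Equiv.addRight (1 : ℤ)).hasSum_iff.mpr ih
    convert! ((ih.mul_left (1 + p ^ (2 * n + 1))).add (ih_pred.mul_left (p ^ (n + 1) * z))).add
      (ih_succ.mul_left (p ^ n * z⁻¹)) using 1
    · funext j
      have thetaTerm_pred : thetaTerm p z j = p ^ j * z * thetaTerm p z (j - 1) := by
        simpa using thetaTerm_add_one hp₀ hz (j - 1)
      simp only [Function.comp_apply, Equiv.subRight_apply, Equiv.coe_addRight,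
        centralQBinom_succ hp₀ hp, thetaTerm_add_one hp₀ hz j, thetaTerm_pred, zpow_add₀ hp₀,
        zpow_sub₀ hp₀, zpow_natCast, zpow_one]
      field_simp [zpow_ne_zero j hp₀]
      ring
    · rw [qPochhammer_succ, qPochhammer_succ]
      field_simp
      ring

end FiniteTripleProduct

section InfiniteProducts

lemma hasProdUniformlyOn_one_add_of_norm_le {ι α R : Type*} [NormedCommRing R] [NormOneClass R]
    [CompleteSpace R] {f : ι → α → R} {u : ι → ℝ} {s : Set α} (hu : Summable u)
    (hf : ∀ i, ∀ x ∈ s, ‖f i x‖ ≤ u i) :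
    HasProdUniformlyOn (fun i x ↦ 1 + f i x) (fun x ↦ ∏' i, (1 + f i x)) s := by
  rw [hasProdUniformlyOn_iff_tendstoUniformlyOn, tendstoUniformlyOn_iff_tendstoUniformly_comp_coe]
  rcases s.eq_empty_or_nonempty with rfl | hs
  · simp [TendstoUniformly]
  have : Nonempty s := hs.to_subtype
  -- In the discrete topology every bounded function on `s` lies in the Banach algebra `s →ᵇ R`.
  let : TopologicalSpace s := ⊥
  have : DiscreteTopology s := ⟨rfl⟩
  let F (i : ι) : BoundedContinuousFunction s R :=
    .ofNormedAddCommGroupDiscrete (fun x ↦ f i x) (u i) fun x ↦ hf i x x.2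
  have hF : Multipliable fun i ↦ 1 + F i :=
    multipliable_one_add_of_summable <| hu.of_nonneg_of_le (fun _ ↦ norm_nonneg _) fun i ↦
      BoundedContinuousFunction.norm_le_of_nonempty.mpr fun x ↦ hf i x x.2
  have tendsto_prod := BoundedContinuousFunction.tendsto_iff_tendstoUniformly.mp hF.hasProd
  have coe_prod (t : Finset ι) : ⇑(∏ i ∈ t, (1 + F i)) = fun x : s ↦ ∏ i ∈ t, (1 + f i x) := by
    ext x
    simp [F]
  simp only [coe_prod] at tendsto_prod
  have coe_tprod (x : s) : HasProd (fun i ↦ 1 + f i x) ((∏' i, (1 + F i)) x) :=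
    tendsto_prod.tendsto_at x
  convert! tendsto_prod using 1
  exact funext fun x ↦ (coe_tprod x).tprod_eq

lemma hasProdLocallyUniformlyOn_mul {ι X R : Type*} [TopologicalSpace X] [SeminormedCommRing R]
    {f f' : ι → X → R} {g g' : X → R} {s : Set X} (hf : HasProdLocallyUniformlyOn f g s)
    (hf' : HasProdLocallyUniformlyOn f' g' s) (hg : ContinuousOn g s) (hg' : ContinuousOn g' s) :
    HasProdLocallyUniformlyOn (fun i x ↦ f i x * f' i x) (fun x ↦ g x * g' x) s := by
  rw [hasProdLocallyUniformlyOn_iff_tendstoLocallyUniformlyOn] at *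
  simpa only [Finset.prod_mul_distrib] using hf.fun_mul₀ hf' hg hg'

variable {K : Type*} [NormedField K] {p : K}

lemma not_isOfFinOrder_of_norm_lt_one (hp : ‖p‖ < 1) : ¬IsOfFinOrder p :=
  fun h ↦ hp.ne h.norm_eq_one

/-- The infinite `q`-Pochhammer symbol `(a; p)_∞ = ∏_{k ≥ 0} (1 - a p^k)`, with base `p`. -/
noncomputable def qPochhammerInf (a p : K) : K := ∏' k : ℕ, (1 - a * p ^ k)

variable [CompleteSpace K]

lemma hasProdLocallyUniformlyOn_qPochhammerInf (hp : ‖p‖ < 1) :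
    HasProdLocallyUniformlyOn (fun (k : ℕ) a ↦ 1 - a * p ^ k) (qPochhammerInf · p) Set.univ := by
  refine hasProdLocallyUniformlyOn_of_of_forall_exists_nhds fun a _ ↦ ?_
  have bound (k : ℕ) (b : K) (hb : b ∈ Metric.ball 0 (‖a‖ + 1)) :
      ‖-(b * p ^ k)‖ ≤ (‖a‖ + 1) * ‖p‖ ^ k := by
    rw [norm_neg, norm_mul, norm_pow]
    gcongr
    exact (mem_ball_zero_iff.mp hb).le
  refine ⟨Metric.ball 0 (‖a‖ + 1), mem_nhdsWithin_of_mem_nhds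
    (Metric.isOpen_ball.mem_nhds (by simp)), ?_⟩
  simpa only [qPochhammerInf, sub_eq_add_neg] using hasProdUniformlyOn_one_add_of_norm_le
    ((summable_geometric_of_lt_one (norm_nonneg p) hp).mul_left (‖a‖ + 1)) bound

lemma continuous_qPochhammerInf (hp : ‖p‖ < 1) : Continuous (qPochhammerInf · p : K → K) := by
  rw [← continuousOn_univ]
  refine (hasProdLocallyUniformlyOn_qPochhammerInf hp).continuousOn (.of_forall fun t ↦ ?_)
  fun_prop

lemma tendsto_qPochhammer (hp : ‖p‖ < 1) (a : K) :
    Tendsto (qPochhammer a p) atTop (𝓝 (qPochhammerInf a p)) :=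
  ((hasProdLocallyUniformlyOn_qPochhammerInf hp).hasProd (Set.mem_univ a)).tendsto_prod_nat

lemma qPochhammerInf_self_ne_zero (hp : ‖p‖ < 1) : qPochhammerInf p p ≠ 0 := by
  simp only [qPochhammerInf, sub_eq_add_neg]
  refine tprod_one_add_ne_zero_of_summable (fun k ↦ ?_) ?_
  · rw [← sub_eq_add_neg]
    exact one_sub_mul_pow_self_ne_zero (not_isOfFinOrder_of_norm_lt_one hp) k
  · simpa only [norm_neg, norm_mul, norm_pow] using
      (summable_geometric_of_lt_one (norm_nonneg p) hp).mul_left ‖p‖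

end InfiniteProducts

section Limit

variable {K : Type*} [NormedField K] {p z : K}

lemma summable_norm_thetaTerm_natCast (hp₀ : p ≠ 0) (hp : ‖p‖ < 1) (hz : z ≠ 0) :
    Summable fun n : ℕ ↦ ‖thetaTerm p z n‖ := by
  have tendsto_ratio : Tendsto (fun n : ℕ ↦ ‖p ^ (n + 1) * z‖) atTop (𝓝 0) := by
    have h := (tendsto_pow_atTop_nhds_zero_of_norm_lt_one hp).comp (tendsto_add_atTop_nat 1)
    simpa using (h.mul_const z).norm
  refine summable_of_ratio_norm_eventually_le one_half_lt_one ?_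
  filter_upwards [tendsto_ratio.eventually_le_const one_half_pos] with n hn
  rw [norm_norm, norm_norm, Nat.cast_succ, thetaTerm_add_one hp₀ hz, norm_mul]
  gcongr
  exact_mod_cast hn

lemma summable_norm_thetaTerm (hp₀ : p ≠ 0) (hp : ‖p‖ < 1) (hz : z ≠ 0) :
    Summable fun j ↦ ‖thetaTerm p z j‖ := by
  refine .of_nat_of_neg_add_one (summable_norm_thetaTerm_natCast hp₀ hp hz) ?_
  simpa only [thetaTerm_neg_add_one p hz, norm_mul] using
    (summable_norm_thetaTerm_natCast hp₀ hp (inv_ne_zero hz)).mul_left ‖z⁻¹‖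

variable [CompleteSpace K]

lemma tendsto_invQPochhammer (hp : ‖p‖ < 1) :
    Tendsto (invQPochhammer p) atTop (𝓝 (qPochhammerInf p p)⁻¹) := by
  rw [← Nat.map_cast_int_atTop, tendsto_map'_iff]
  exact (tendsto_qPochhammer hp p).inv₀ (qPochhammerInf_self_ne_zero hp)

lemma tendsto_centralQBinom (hp : ‖p‖ < 1) (j : ℤ) :
    Tendsto (centralQBinom p · j) atTop (𝓝 (qPochhammerInf p p)⁻¹) := by
  have tendsto_add (i : ℤ) : Tendsto (fun n : ℕ ↦ invQPochhammer p (n + i)) atTop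
      (𝓝 (qPochhammerInf p p)⁻¹) :=
    (tendsto_invQPochhammer hp).comp
      (tendsto_atTop_add_const_right _ i tendsto_natCast_atTop_atTop)
  have tendsto_two_mul : Tendsto (fun n ↦ qPochhammer p p (2 * n)) atTop (𝓝 (qPochhammerInf p p)) :=
    (tendsto_qPochhammer hp p).comp (tendsto_id.const_mul_atTop' two_pos)
  simpa [centralQBinom, sub_eq_add_neg, qPochhammerInf_self_ne_zero hp] using
    tendsto_two_mul.mul ((tendsto_add j).mul (tendsto_add (-j)))

lemma exists_norm_centralQBinom_le (hp : ‖p‖ < 1) :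
    ∃ C, ∀ n j, ‖centralQBinom p n j‖ ≤ C := by
  obtain ⟨A, hA⟩ := (tendsto_qPochhammer hp p).norm.bddAbove_range
  obtain ⟨B, hB⟩ :=
    ((tendsto_qPochhammer hp p).inv₀ (qPochhammerInf_self_ne_zero hp)).norm.bddAbove_range
  rw [mem_upperBounds, Set.forall_mem_range] at hA hB
  have hB' (m : ℤ) : ‖invQPochhammer p m‖ ≤ B := by
    cases m with
    | ofNat m => exact hB m
    | negSucc m => simpa [invQPochhammer] using (norm_nonneg _).trans (hB 0)
  have hA₀ : 0 ≤ A := (norm_nonneg _).trans (hA 0)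
  have hB₀ : 0 ≤ B := (norm_nonneg _).trans (hB 0)
  refine ⟨A * (B * B), fun n j ↦ ?_⟩
  rw [centralQBinom, norm_mul, norm_mul]
  gcongr
  exacts [hA _, hB' _, hB' _]

theorem qPochhammerInf_mul_mul_eq_tsum_thetaTerm (hp₀ : p ≠ 0) (hp : ‖p‖ < 1) (hz : z ≠ 0) :
    qPochhammerInf p p * qPochhammerInf (-(p * z)) p * qPochhammerInf (-z⁻¹) p =
      ∑' j, thetaTerm p z j := by
  obtain ⟨C, hC⟩ := exists_norm_centralQBinom_le hp
  have tendsto_sum : Tendsto (fun n ↦ ∑' j, centralQBinom p n j * thetaTerm p z j) atTop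
      (𝓝 (∑' j, (qPochhammerInf p p)⁻¹ * thetaTerm p z j)) := by
    refine tendsto_tsum_of_dominated_convergence
      ((summable_norm_thetaTerm hp₀ hp hz).mul_left C)
      (fun j ↦ (tendsto_centralQBinom hp j).mul_const _) (.of_forall fun n j ↦ ?_)
    rw [norm_mul]
    gcongr
    exact hC n j
  have tendsto_prod := (tendsto_qPochhammer hp (-(p * z))).mul (tendsto_qPochhammer hp (-z⁻¹))
  have finite_triple (n : ℕ) : ∑' j, centralQBinom p n j * thetaTerm p z j =
      qPochhammer (-(p * z)) p n * qPochhammer (-z⁻¹) p n :=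
    (hasSum_centralQBinom_mul_thetaTerm hp₀ (not_isOfFinOrder_of_norm_lt_one hp) hz n).tsum_eq
  simp only [finite_triple] at tendsto_sum
  rw [mul_assoc, tendsto_nhds_unique tendsto_prod tendsto_sum, tsum_mul_left,
    mul_inv_cancel_left₀ (qPochhammerInf_self_ne_zero hp)]

theorem hasProdLocallyUniformlyOn_tsum_thetaTerm (hp₀ : p ≠ 0) (hp : ‖p‖ < 1) :
    HasProdLocallyUniformlyOn
      (fun (k : ℕ) z ↦ (1 - p ^ (k + 1)) * (1 + p ^ (k + 1) * z) * (1 + p ^ k * z⁻¹))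
      (fun z ↦ ∑' j, thetaTerm p z j) {z | z ≠ 0} := by
  have hasProd_comp {a : K → K} (ha : ContinuousOn a {z | z ≠ 0}) :
      HasProdLocallyUniformlyOn (fun (k : ℕ) z ↦ 1 - a z * p ^ k)
        (fun z ↦ qPochhammerInf (a z) p) {z | z ≠ 0} :=
    (hasProdLocallyUniformlyOn_qPochhammerInf hp).comp a (Set.mapsTo_univ _ _) ha
  have continuousOn_comp {a : K → K} (ha : ContinuousOn a {z | z ≠ 0}) :
      ContinuousOn (fun z ↦ qPochhammerInf (a z) p) {z | z ≠ 0} :=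
    (continuous_qPochhammerInf hp).comp_continuousOn ha
  have hconst : ContinuousOn (fun _ : K ↦ p) {z | z ≠ 0} := by fun_prop
  have hmul : ContinuousOn (fun z ↦ -(p * z)) {z | z ≠ 0} := by fun_prop
  have hinv : ContinuousOn (fun z : K ↦ -z⁻¹) {z | z ≠ 0} := continuousOn_inv₀.neg
  have h := hasProdLocallyUniformlyOn_mul
    (hasProdLocallyUniformlyOn_mul (hasProd_comp hconst) (hasProd_comp hmul)
      (continuousOn_comp hconst) (continuousOn_comp hmul))
    (hasProd_comp hinv) ((continuousOn_comp hconst).mul (continuousOn_comp hmul))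
    (continuousOn_comp hinv)
  refine (h.congr_right fun z hz ↦ qPochhammerInf_mul_mul_eq_tsum_thetaTerm hp₀ hp hz).congr ?_
  refine fun t z _ ↦ Finset.prod_congr rfl fun k _ ↦ ?_
  ring

end Limit

theorem theta_triple_product_general {K : Type*} [NormedField K] [CompleteSpace K] (q : K)
    (hq : 1 < ‖q‖) :
    (∀ z : K, z ≠ 0 → HasProd
      (fun ℓ : ℕ => (1 - q ^ (-(ℓ : ℤ) - 1)) * (1 + q ^ (-(ℓ : ℤ) - 1) * z) *
        (1 + q ^ (-(ℓ : ℤ)) * z⁻¹)) (∑' ℓ : ℤ, q ^ (-(ℓ * (ℓ + 1) / 2)) * z ^ ℓ)) ∧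
    TendstoLocallyUniformlyOn
      (fun (n : ℕ) (z : K) => ∏ ℓ ∈ Finset.range n,
        (1 - q ^ (-(ℓ : ℤ) - 1)) * (1 + q ^ (-(ℓ : ℤ) - 1) * z) * (1 + q ^ (-(ℓ : ℤ)) * z⁻¹))
      (fun z ↦ ∑' ℓ : ℤ, q ^ (-(ℓ * (ℓ + 1) / 2)) * z ^ ℓ) atTop {z : K | z ≠ 0} := by
  have hp₀ : q⁻¹ ≠ 0 := inv_ne_zero (norm_pos_iff.mp (one_pos.trans hq))
  have hp : ‖q⁻¹‖ < 1 := by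
    rw [norm_inv]
    exact inv_lt_one_of_one_lt₀ hq
  have zpow_neg_natCast (ℓ : ℕ) : q ^ (-(ℓ : ℤ)) = q⁻¹ ^ ℓ := by
    rw [zpow_neg, zpow_natCast, inv_pow]
  have zpow_neg_natCast_sub_one (ℓ : ℕ) : q ^ (-(ℓ : ℤ) - 1) = q⁻¹ ^ (ℓ + 1) := by
    rw [← zpow_neg_natCast, Nat.cast_succ, neg_add']
  have h := hasProdLocallyUniformlyOn_tsum_thetaTerm hp₀ hp
  simp only [thetaTerm, inv_zpow'] at h
  simp only [zpow_neg_natCast, zpow_neg_natCast_sub_one]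
  exact ⟨fun z hz ↦ h.hasProd hz, h.tendstoLocallyUniformlyOn_finsetRange⟩

/-- the Jacobi triple product formula
`Θ_q(z) = ∏_{ℓ∈ℕ} (1 - q^{-ℓ-1})(1 + q^{-ℓ-1}z)(1 + q^{-ℓ}z⁻¹)` for every `z ∈ ℂ*`,
the infinite product converging on `ℂ*`, locally uniformly. -/
theorem theta_triple_product (q : ℂ) (hq : 1 < ‖q‖) :
    (∀ z : ℂ, z ≠ 0 → HasProd
      (fun ℓ : ℕ => (1 - q ^ (-(ℓ : ℤ) - 1)) * (1 + q ^ (-(ℓ : ℤ) - 1) * z) *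
        (1 + q ^ (-(ℓ : ℤ)) * z⁻¹)) (theta q z)) ∧
    TendstoLocallyUniformlyOn
      (fun (n : ℕ) (z : ℂ) => ∏ ℓ ∈ Finset.range n,
        (1 - q ^ (-(ℓ : ℤ) - 1)) * (1 + q ^ (-(ℓ : ℤ) - 1) * z) * (1 + q ^ (-(ℓ : ℤ)) * z⁻¹))
      (theta q) Filter.atTop {z : ℂ | z ≠ 0} :=
  theta_triple_product_general q hq
end

section
/- Let (μ,K) ∈ ℚ_{>0} × ℕ* with K ∈ μℕ*, λ ∈ ℂ*, and let g ∈ ℍ^{[λ]}_{μ,K}. Then σ_q^{1/K} g (defined by (σ_q^{1/K} g)(ζ) := g(q^{1/K} ζ)) also belongs to ℍ^{[λ]}_{μ,K}, and the q-Laplace transform satisfies L^{[λ]}_{μ,K}(σ_q^{1/K} g)(z) = L^{[λ]}_{μ,K}(g)(q^{1/K} z) for every z ∈ ℂ* near 0 with z, q^{1/K}z ∉ −λq^{K^{−1}ℤ}. -/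
/-- The real theta function `Θ_Q(x) = ∑_{ℓ ∈ ℤ} Q^{-ℓ(ℓ+1)/2} x^ℓ` for real `Q, x`;
for `Q > 1` and `x > 0` it is a positive real number. -/
noncomputable def thetaR (Q x : ℝ) : ℝ := ∑' ℓ : ℤ, Q ^ (-(ℓ * (ℓ + 1) / 2)) * x ^ ℓ

/-- Rational powers `q^α := exp(α log q)` of a complex number, via the principal logarithm. -/
noncomputable def qpow (q : ℂ) (α : ℚ) : ℂ := Complex.exp ((α : ℂ) * Complex.log q)

/-- Rational (real) powers `b^α` for a real base. -/
noncomputable def qpowR (b : ℝ) (α : ℚ) : ℝ := b ^ (α : ℝ)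

/-- The `ε`-neighborhood of the discrete `q^{1/K}`-spiral `λ q^{K⁻¹ℤ}` in `ℂ*`:
`∪_{ℓ∈K⁻¹ℤ} {z ∈ ℂ* : |z - q^ℓ λ| < ε |q^ℓ λ|}`. -/
def spiralNhd (q lam : ℂ) (K : ℕ) (ε : ℝ) : Set ℂ :=
  {z : ℂ | z ≠ 0 ∧ ∃ j : ℤ,
    ‖z - qpow q ((j : ℚ) / K) * lam‖ < ε * ‖qpow q ((j : ℚ) / K) * lam‖}

/-- Membership in the space `ℍ^{[λ]}_{μ,K}`: `f` is meromorphic on a punctured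
neighborhood of `0` in `ℂ*` and can be continued analytically to a connected domain `Ω`
containing an `ε`-neighborhood of the spiral `λ q^{K⁻¹ℤ}`, with
`q^{1/μ}`-exponential growth of order 1 at infinity:
`|f(z)| < L·Θ_{|q|^{1/μ}}(M|z|)` on `Ω`. -/
def memH (q : ℂ) (μ : ℚ) (K : ℕ) (lam : ℂ) (f : ℂ → ℂ) : Prop :=
  (∃ r > 0, MeromorphicOn f {z : ℂ | z ≠ 0 ∧ ‖z‖ < r}) ∧
  ∃ ε > 0, ∃ Ω : Set ℂ, IsOpen Ω ∧ IsConnected Ω ∧ spiralNhd q lam K ε ⊆ Ω ∧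
    AnalyticOnNhd ℂ f Ω ∧
    ∃ L > 0, ∃ M > 0, ∀ z ∈ Ω, ‖f z‖ < L * thetaR (qpowR ‖q‖ (1 / μ)) (M * ‖z‖)

/-- The `q`-Laplace transform of order `μ` in the direction `λ`:
`L^{[λ]}_{μ,K}(f)(z) = (μ/K) ∑_{ℓ∈K⁻¹ℤ} f(q^ℓ λ) / Θ_{q^{1/μ}}(q^{1/μ+ℓ} λ / z)`. -/
noncomputable def qLaplace (q : ℂ) (μ : ℚ) (K : ℕ) (lam : ℂ) (f : ℂ → ℂ) (z : ℂ) : ℂ :=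
  ((μ : ℂ) / (K : ℂ)) * ∑' j : ℤ, f (qpow q ((j : ℚ) / K) * lam) /
    theta (qpow q (1 / μ)) (qpow q (1 / μ + (j : ℚ) / K) * lam / z)

/-!
Rescaling the variable by any `c ≠ 0` carries the direction `cλ` to the direction `λ`: it maps
`ℍ^{[cλ]}` into `ℍ^{[λ]}`, and since `Θ` only sees the quotient of the direction by `z`, it
intertwines the two transforms. Both the space and the transform depend on the direction only
through the spiral `λ q^{K⁻¹ℤ}`, which multiplication by `c = q^{n/K}` permutes.
-/

theorem qpow_add (q : ℂ) (α β : ℚ) : qpow q (α + β) = qpow q α * qpow q β := by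
  simp only [qpow, Rat.cast_add, add_mul, Complex.exp_add]

theorem qpow_ne_zero (q : ℂ) (α : ℚ) : qpow q α ≠ 0 := Complex.exp_ne_zero _

theorem qpow_div_mul_qpow_div_mul (q : ℂ) (K : ℕ) (j n : ℤ) (z : ℂ) :
    qpow q (j / K) * (qpow q (n / K) * z) = qpow q (((j + n : ℤ) : ℚ) / K) * z := by
  rw [Int.cast_add, add_div, qpow_add, mul_assoc]

theorem meromorphicOn_punctured_ball_comp_const_mul {𝕜 E : Type*} [NontriviallyNormedField 𝕜]
    [NormedAddCommGroup E] [NormedSpace 𝕜 E] {f : 𝕜 → E} {c : 𝕜} (hc : c ≠ 0) {r : ℝ}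
    (hf : MeromorphicOn f {z | z ≠ 0 ∧ ‖z‖ < r}) :
    MeromorphicOn (fun z => f (c * z)) {z | z ≠ 0 ∧ ‖z‖ < r / ‖c‖} := by
  rintro z ⟨hz, hzr⟩
  have hcz : ‖c * z‖ < r := by
    rwa [norm_mul, ← lt_div_iff₀' (norm_pos_iff.mpr hc)]
  exact (hf (c * z) ⟨mul_ne_zero hc hz, hcz⟩).comp_analyticAt (g := (c * ·)) (by fun_prop)

section Scaling

variable {q c : ℂ} {μ : ℚ} {K : ℕ} {lam : ℂ} {f : ℂ → ℂ}

theorem const_mul_mem_spiralNhd_iff (hc : c ≠ 0) {ε : ℝ} {z : ℂ} :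
    c * z ∈ spiralNhd q (c * lam) K ε ↔ z ∈ spiralNhd q lam K ε := by
  have hc' : 0 < ‖c‖ := norm_pos_iff.mpr hc
  simp only [spiralNhd, Set.mem_ofPred_eq, mul_left_comm _ c lam, ← mul_sub, norm_mul c,
    mul_left_comm ε, mul_lt_mul_iff_right₀ hc', ne_eq, mul_eq_zero, hc, false_or]

theorem memH.comp_const_mul (hc : c ≠ 0) (hf : memH q μ K (c * lam) f) :
    memH q μ K lam (fun z => f (c * z)) := by
  obtain ⟨⟨r, hr, hmero⟩, ε, hε, Ω, hΩ_open, hΩ_conn, hΩ_spiral, hf_an, L, hL, M, hM, hbound⟩ := hf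
  have hc' : 0 < ‖c‖ := norm_pos_iff.mpr hc
  have hpreimage_conn : IsConnected ((c * ·) ⁻¹' Ω) :=
    (Homeomorph.mulLeft₀ c hc).isConnected_preimage.mpr hΩ_conn
  have hspiral : spiralNhd q lam K ε ⊆ (c * ·) ⁻¹' Ω := fun z hz =>
    hΩ_spiral ((const_mul_mem_spiralNhd_iff hc).mpr hz)
  refine ⟨⟨r / ‖c‖, div_pos hr hc', meromorphicOn_punctured_ball_comp_const_mul hc hmero⟩,
    ε, hε, (c * ·) ⁻¹' Ω, hΩ_open.preimage (continuous_const_mul c), hpreimage_conn, hspiral,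
    hf_an.comp (analyticOnNhd_const.mul analyticOnNhd_id) (Set.mapsTo_preimage _ _),
    L, hL, M * ‖c‖, mul_pos hM hc', fun z hz => ?_⟩
  simpa only [norm_mul, mul_assoc] using hbound (c * z) hz

theorem qLaplace_comp_const_mul (hc : c ≠ 0) (z : ℂ) :
    qLaplace q μ K lam (fun ζ => f (c * ζ)) z = qLaplace q μ K (c * lam) f (c * z) := by
  simp only [qLaplace, mul_left_comm _ c lam, mul_div_mul_left _ _ hc]

end Scaling

section Spiral

variable (q : ℂ) (μ : ℚ) (K : ℕ) (lam : ℂ) (n : ℤ)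

theorem spiralNhd_qpow_mul (ε : ℝ) :
    spiralNhd q (qpow q (n / K) * lam) K ε = spiralNhd q lam K ε := by
  ext z
  simp only [spiralNhd, Set.mem_ofPred_eq, qpow_div_mul_qpow_div_mul]
  exact and_congr_right fun _ => (Equiv.addRight n).exists_congr fun _ => Iff.rfl

theorem memH_qpow_mul_iff (f : ℂ → ℂ) :
    memH q μ K (qpow q (n / K) * lam) f ↔ memH q μ K lam f := by
  simp only [memH, spiralNhd_qpow_mul]

theorem qLaplace_qpow_mul (f : ℂ → ℂ) (z : ℂ) :
    qLaplace q μ K (qpow q (n / K) * lam) f z = qLaplace q μ K lam f z := by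
  symm
  rw [qLaplace, qLaplace, ← (Equiv.addRight n).tsum_eq]
  simp only [Equiv.coe_addRight, qpow_add q (1 / μ), mul_assoc (qpow q (1 / μ)),
    qpow_div_mul_qpow_div_mul]

end Spiral

theorem qLaplace_sigma_general (q : ℂ) (hq : 1 < ‖q‖) (μ : ℚ) (hμ : 0 < μ) (K : ℕ) (hK : 0 < K)
    (lam : ℂ) (hlam : lam ≠ 0) (n : ℤ) (g : ℂ → ℂ) (hg : memH q μ K lam g) :
    memH q μ K lam (fun ζ => g (qpow q (n / K) * ζ)) ∧
    ∀ z : ℂ, z ≠ 0 → (∀ j : ℤ, z ≠ -(qpow q ((j : ℚ) / K) * lam)) →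
      qLaplace q μ K lam (fun ζ => g (qpow q (n / K) * ζ)) z
        = qLaplace q μ K lam g (qpow q (n / K) * z) := by
  have hc : qpow q (n / K) ≠ 0 := qpow_ne_zero q _
  refine ⟨((memH_qpow_mul_iff q μ K lam n g).mpr hg).comp_const_mul hc, fun z _ _ => ?_⟩
  rw [qLaplace_comp_const_mul hc, qLaplace_qpow_mul]

/-- if `g ∈ ℍ^{[λ]}_{μ,K}` then `σ_q^{1/K} g ∈ ℍ^{[λ]}_{μ,K}` and
`L^{[λ]}_{μ,K}(σ_q^{1/K} g)(z) = L^{[λ]}_{μ,K}(g)(q^{1/K} z)` for `z ∈ ℂ*` near `0`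
off the spirals. -/
theorem qLaplace_sigma (q : ℂ) (hq : 1 < ‖q‖) (μ : ℚ) (hμ : 0 < μ) (K : ℕ) (hK : 0 < K)
    (hKμ : ∃ m : ℕ, 0 < m ∧ (K : ℚ) = μ * m) (lam : ℂ) (hlam : lam ≠ 0)
    (g : ℂ → ℂ) (hg : memH q μ K lam g) :
    memH q μ K lam (fun ζ => g (qpow q (1 / K) * ζ)) ∧
    ∃ r > 0, ∀ z : ℂ, z ≠ 0 → ‖z‖ < r →
      (∀ j : ℤ, z ≠ -(qpow q ((j : ℚ) / K) * lam)) →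
      (∀ j : ℤ, qpow q (1 / K) * z ≠ -(qpow q ((j : ℚ) / K) * lam)) →
      qLaplace q μ K lam (fun ζ => g (qpow q (1 / K) * ζ)) z
        = qLaplace q μ K lam g (qpow q (1 / K) * z) := by
  obtain ⟨hmem, heq⟩ := qLaplace_sigma_general q hq μ hμ K hK lam hlam 1 g hg
  rw [Int.cast_one] at hmem heq
  exact ⟨hmem, 1, one_pos, fun z hz _ hspiral _ => heq z hz hspiral⟩
end
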